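/- arXiv:2207.02385 — 2 statements merged into one kernel-verified Lean document; each statement's English description precedes it below -/
import Mathlib

section
/- Let d ≥ 1, let D ⊆ ℝ^d be a bounded measurable set of Lebesgue measure m(D), and let u, v : ℝ^d → ℝ be smooth functions with compact support contained in D. Then for every ε > 0 and every α ∈ (0,1): ∫_D |u(x) − v(x)|² · log₊( max(|u(x)|, |v(x)|) ) dx ≤ ε ∫ |∇(u−v)(x)|² dx + (d/4)·log(1/ε) · ‖u − v‖² + ‖u − v‖² · log‖u − v‖ + (1/(2(1−α)e)) · (‖u‖^{2(1−α)} + ‖v‖^{2(1−α)}) · ‖u − v‖^{2α} + (1/(2(1−α)e)) · (4 m(D))^{1−α} · ‖u − v‖^{2α}, where ‖·‖ denotes the L² norm and ‖u−v‖² log‖u−v‖ is interpreted as 0 when u = v. -/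
open MeasureTheory

/-!
Since `e t ≤ exp t`, a nonnegative `W` and a positive `M` satisfy
`W log M ≤ W log W + W ^ α M ^ (1 - α) / ((1 - α) e)`. With `W = |u - v|²` and
`M = max (1, |u|², |v|²)` the last term is controlled by Hölder's inequality, and `∫ W log W` by a
logarithmic Sobolev inequality for `w = u - v`.

For the latter, the one-dimensional bound `φ(t)² ≤ r⁻¹ (∫ φ² + r² ∫ |φ′|²)` is applied in each
coordinate direction and integrated over a set `s` of further coordinates. It compares the marginals
`F_s` of `w²` over `s` and `s ∪ {i}`:
`log F_s ≤ log F_{s ∪ i} - log r + r² G_{s ∪ i} / F_{s ∪ i}`, where `G_s` is the marginal of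
`|∂ᵢ w|²`. Telescoping from `F_∅ = w²` to `F_univ = ‖w‖²` bounds `log w²` pointwise, and
`∫ w² G_s / F_s ≤ ‖∂ᵢ w‖²`, because the quotient does not depend on the coordinates in `s`.
-/

open Function
open scoped ENNReal

lemma continuous_updateFinset {ι : Type*} [DecidableEq ι] {X : ι → Type*}
    [∀ i, TopologicalSpace (X i)] (x : ∀ i, X i) (s : Finset ι) : Continuous (updateFinset x s) :=
  continuous_pi fun i ↦ by
    by_cases hi : i ∈ s
    · simpa [updateFinset, hi] using continuous_apply _
    · simpa [updateFinset, hi] using continuous_const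

section Lmarginal

variable {ι : Type*} [DecidableEq ι] {X : ι → Type*} [∀ i, MeasurableSpace (X i)]
  {μ : ∀ i, Measure (X i)} [∀ i, SigmaFinite (μ i)] {f g : (∀ i, X i) → ℝ≥0∞}

lemma lmarginal_le_mul_lmarginal_insert_add {a b : ℝ≥0∞} {i : ι} {s : Finset ι} (hi : i ∉ s)
    (hf : Measurable f) (hg : Measurable g)
    (h : ∀ x, f x ≤ a * ((∫⋯∫⁻_{i}, f ∂μ) x + b * (∫⋯∫⁻_{i}, g ∂μ) x)) (x : ∀ i, X i) :
    (∫⋯∫⁻_s, f ∂μ) x ≤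
      a * ((∫⋯∫⁻_insert i s, f ∂μ) x + b * (∫⋯∫⁻_insert i s, g ∂μ) x) := by
  have hFi := (hf.lmarginal μ (s := {i})).comp (measurable_updateFinset (x := x) (s := s))
  have hGi := (hg.lmarginal μ (s := {i})).comp (measurable_updateFinset (x := x) (s := s))
  calc (∫⋯∫⁻_s, f ∂μ) x
      ≤ (∫⋯∫⁻_s, fun y ↦ a * ((∫⋯∫⁻_{i}, f ∂μ) y + b * (∫⋯∫⁻_{i}, g ∂μ) y) ∂μ) x :=
        lmarginal_mono h x
    _ = a * ((∫⋯∫⁻_s, ∫⋯∫⁻_{i}, f ∂μ ∂μ) x + b * (∫⋯∫⁻_s, ∫⋯∫⁻_{i}, g ∂μ ∂μ) x) := by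
        refine (lintegral_const_mul a (hFi.add (hGi.const_mul b))).trans (congrArg (a * ·) ?_)
        exact (lintegral_add_left hFi _).trans (congrArg (_ + ·) (lintegral_const_mul b hGi))
    _ = _ := by
        simp only [lmarginal_insert' _ hf hi, lmarginal_insert' _ hg hi, lmarginal_singleton]

lemma lintegral_mul_lmarginal_div_lmarginal_le [Fintype ι] (s : Finset ι) (hf : Measurable f)
    (hg : Measurable g) :
    ∫⁻ x, f x * ((∫⋯∫⁻_s, g ∂μ) x / (∫⋯∫⁻_s, f ∂μ) x) ∂Measure.pi μ ≤ ∫⁻ x, g x ∂Measure.pi μ := by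
  refine lintegral_le_of_lmarginal_le s (hf.mul ((hg.lmarginal μ).div (hf.lmarginal μ))) hg
    fun x ↦ ?_
  have hconst (h : (∀ i, X i) → ℝ≥0∞) (y : ∀ i : s, X i) :
      (∫⋯∫⁻_s, h ∂μ) (updateFinset x s y) = (∫⋯∫⁻_s, h ∂μ) x :=
    lmarginal_congr μ h fun i hi ↦ by simp [updateFinset, hi]
  calc (∫⋯∫⁻_s, (fun y ↦ f y * ((∫⋯∫⁻_s, g ∂μ) y / (∫⋯∫⁻_s, f ∂μ) y)) ∂μ) x
      = (∫⋯∫⁻_s, f ∂μ) x * ((∫⋯∫⁻_s, g ∂μ) x / (∫⋯∫⁻_s, f ∂μ) x) := by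
        rw [lmarginal]
        simp only [hconst]
        exact lintegral_mul_const _ (hf.comp measurable_updateFinset)
    _ ≤ (∫⋯∫⁻_s, g ∂μ) x := ENNReal.mul_div_le

lemma measurable_mul_lmarginal_div_lmarginal (s : Finset ι) (hf : Measurable f)
    (hg : Measurable g) :
    Measurable fun x ↦ f x * ((∫⋯∫⁻_s, g ∂μ) x / (∫⋯∫⁻_s, f ∂μ) x) :=
  hf.mul ((hg.lmarginal μ).div (hf.lmarginal μ))

lemma integrable_toReal_mul_lmarginal_div_lmarginal [Fintype ι] (s : Finset ι) (hf : Measurable f)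
    (hg : Measurable g) (hgt : ∫⁻ x, g x ∂Measure.pi μ ≠ ∞) :
    Integrable (fun x ↦ (f x * ((∫⋯∫⁻_s, g ∂μ) x / (∫⋯∫⁻_s, f ∂μ) x)).toReal) (.pi μ) :=
  integrable_toReal_of_lintegral_ne_top
    (measurable_mul_lmarginal_div_lmarginal s hf hg).aemeasurable
    (ne_top_of_le_ne_top hgt (lintegral_mul_lmarginal_div_lmarginal_le s hf hg))

lemma integral_toReal_mul_lmarginal_div_lmarginal_le [Fintype ι] (s : Finset ι)
    (hf : Measurable f) (hg : Measurable g) (hgt : ∫⁻ x, g x ∂Measure.pi μ ≠ ∞) :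
    ∫ x, (f x * ((∫⋯∫⁻_s, g ∂μ) x / (∫⋯∫⁻_s, f ∂μ) x)).toReal ∂.pi μ ≤
      (∫⁻ x, g x ∂.pi μ).toReal := by
  have hle := lintegral_mul_lmarginal_div_lmarginal_le (μ := μ) s hf hg
  have hm := measurable_mul_lmarginal_div_lmarginal (μ := μ) s hf hg
  rw [integral_toReal hm.aemeasurable (ae_lt_top hm (ne_top_of_le_ne_top hgt hle))]
  exact ENNReal.toReal_mono hgt hle

variable [∀ i, TopologicalSpace (X i)]

lemma lmarginal_ne_zero_of_continuous [∀ i, (μ i).IsOpenPosMeasure] (hf : Continuous f)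
    (hfm : Measurable f) {x : ∀ i, X i} (hx : f x ≠ 0) (s : Finset ι) :
    (∫⋯∫⁻_s, f ∂μ) x ≠ 0 := fun h ↦ hx <| by
  have hae := (lintegral_eq_zero_iff (hfm.comp measurable_updateFinset)).1 h
  have hzero := ((hf.comp (continuous_updateFinset x s)).ae_eq_iff_eq _ continuous_zero).1 hae
  simpa using congrFun hzero (s.restrict x)

lemma lmarginal_ofReal_ne_top [∀ i, T2Space (X i)] [∀ i, SecondCountableTopology (X i)]
    [∀ i, BorelSpace (X i)] [∀ i, IsLocallyFiniteMeasure (μ i)]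
    {h : (∀ i, X i) → ℝ} (hh : Continuous h) (hhs : HasCompactSupport h) (s : Finset ι)
    (x : ∀ i, X i) : (∫⋯∫⁻_s, (fun y ↦ ENNReal.ofReal (h y)) ∂μ) x ≠ ∞ := by
  have hsec : HasCompactSupport (h ∘ updateFinset x s) := by
    refine .intro (hhs.isCompact.image s.continuous_restrict) fun y hy ↦
      image_eq_zero_of_notMem_tsupport (f := h) fun hmem ↦ hy ⟨updateFinset x s y, hmem, ?_⟩
    simp [funext_iff, updateFinset]
  have hsec_int : Integrable (h ∘ updateFinset x s) (.pi fun i : s ↦ μ i) :=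
    (hh.comp (continuous_updateFinset x s)).integrable_of_hasCompactSupport hsec
  exact hsec_int.lintegral_lt_top.ne

end Lmarginal

section LogSobolev

variable {ι : Type*} [DecidableEq ι] {X : ι → Type*} [∀ i, MeasurableSpace (X i)]
  {μ : ∀ i, Measure (X i)} [∀ i, SigmaFinite (μ i)] {r : ℝ}

lemma log_toReal_le_of_le_mul_add {a b e : ℝ≥0∞} (hr : 0 < r) (ha : a ≠ 0) (hb₀ : b ≠ 0)
    (hb : b ≠ ∞) (he : e ≠ ∞) (h : a ≤ ENNReal.ofReal r⁻¹ * (b + ENNReal.ofReal (r ^ 2) * e)) :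
    Real.log a.toReal ≤ Real.log b.toReal - Real.log r + r ^ 2 * (e / b).toReal := by
  have hrhs : ENNReal.ofReal r⁻¹ * (b + ENNReal.ofReal (r ^ 2) * e) ≠ ∞ := by finiteness
  have hb' : 0 < b.toReal := ENNReal.toReal_pos hb₀ hb
  have ha' : 0 < a.toReal := ENNReal.toReal_pos ha (ne_top_of_le_ne_top hrhs h)
  have hreal : a.toReal ≤ b.toReal * r⁻¹ * (1 + r ^ 2 * (e / b).toReal) := by
    calc a.toReal ≤ r⁻¹ * (b.toReal + r ^ 2 * e.toReal) := by
          refine (ENNReal.toReal_mono hrhs h).trans_eq ?_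
          rw [ENNReal.toReal_mul, ENNReal.toReal_add hb (by finiteness), ENNReal.toReal_mul,
            ENNReal.toReal_ofReal (by positivity), ENNReal.toReal_ofReal (by positivity)]
      _ = _ := by rw [ENNReal.toReal_div]; field_simp
  calc Real.log a.toReal
      ≤ Real.log (b.toReal * r⁻¹ * (1 + r ^ 2 * (e / b).toReal)) := Real.log_le_log ha' hreal
    _ = Real.log b.toReal - Real.log r + Real.log (1 + r ^ 2 * (e / b).toReal) := by
        rw [Real.log_mul (by positivity) (by positivity), Real.log_mul hb'.ne' (by positivity),
          Real.log_inv, sub_eq_add_neg]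
    _ ≤ _ := by
        have := Real.log_le_sub_one_of_pos (x := 1 + r ^ 2 * (e / b).toReal) (by positivity)
        linarith

/-- The sets `t i` are the initial segments of the enumeration of `s` along which the marginals
telescope. -/
lemma exists_log_le_log_lmarginal_add_sum
    {f : (∀ i, X i) → ℝ≥0∞} {g : ι → (∀ i, X i) → ℝ≥0∞} (hr : 0 < r)
    (hf : Measurable f) (hg : ∀ i, Measurable (g i))
    (hf₀ : ∀ x, f x ≠ 0 → ∀ s, (∫⋯∫⁻_s, f ∂μ) x ≠ 0) (hft : ∀ x s, (∫⋯∫⁻_s, f ∂μ) x ≠ ∞)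
    (hgt : ∀ i x s, (∫⋯∫⁻_s, g i ∂μ) x ≠ ∞)
    (h : ∀ i x, f x ≤ ENNReal.ofReal r⁻¹ *
      ((∫⋯∫⁻_{i}, f ∂μ) x + ENNReal.ofReal (r ^ 2) * (∫⋯∫⁻_{i}, g i ∂μ) x)) (s : Finset ι) :
    ∃ t : ι → Finset ι, ∀ x, f x ≠ 0 →
      Real.log (f x).toReal ≤ Real.log ((∫⋯∫⁻_s, f ∂μ) x).toReal - s.card * Real.log r +
        r ^ 2 * ∑ i ∈ s, ((∫⋯∫⁻_t i, g i ∂μ) x / (∫⋯∫⁻_t i, f ∂μ) x).toReal := by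
  induction s using Finset.induction with
  | empty => exact ⟨fun _ ↦ ∅, fun x _ ↦ by simp⟩
  | insert i s hi ih =>
    obtain ⟨t, ht⟩ := ih
    refine ⟨update t i (insert i s), fun x hx ↦ ?_⟩
    have hstep := log_toReal_le_of_le_mul_add hr (hf₀ x hx s) (hf₀ x hx _) (hft x _) (hgt i x _)
      (lmarginal_le_mul_lmarginal_insert_add hi hf (hg i) (h i) x)
    have hsum : ∀ j ∈ s, ((∫⋯∫⁻_update t i (insert i s) j, g j ∂μ) x /
        (∫⋯∫⁻_update t i (insert i s) j, f ∂μ) x).toReal =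
          ((∫⋯∫⁻_t j, g j ∂μ) x / (∫⋯∫⁻_t j, f ∂μ) x).toReal := fun j hj ↦ by
      rw [update_of_ne (ne_of_mem_of_not_mem hj hi)]
    rw [Finset.sum_insert hi, Finset.sum_congr rfl hsum, update_self,
      Finset.card_insert_of_notMem hi]
    push_cast
    linarith [ht x hx]

lemma ofReal_sq_le_lintegral_sq_add_lintegral_deriv_sq {φ : ℝ → ℝ} (hφ : ContDiff ℝ 1 φ)
    (hφs : HasCompactSupport φ) (hr : 0 < r) (t : ℝ) :
    ENNReal.ofReal (φ t ^ 2) ≤ ENNReal.ofReal r⁻¹ * ((∫⁻ y, ENNReal.ofReal (φ y ^ 2)) +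
      ENNReal.ofReal (r ^ 2) * ∫⁻ y, ENNReal.ofReal (deriv φ y ^ 2)) := by
  have hderiv (y : ℝ) : deriv (fun y ↦ φ y ^ 2) y = 2 * φ y * deriv φ y := by
    simpa using ((hφ.differentiable one_ne_zero y).hasDerivAt.fun_pow 2).deriv
  have hsq : Measurable fun y ↦ ENNReal.ofReal (φ y ^ 2) := by
    have := hφ.continuous.measurable
    fun_prop
  have hderivSq : Measurable fun y ↦ ENNReal.ofReal (deriv φ y ^ 2) := by
    have := measurable_deriv φ
    fun_prop
  have young (y : ℝ) : |2 * φ y * deriv φ y| ≤ r⁻¹ * (φ y ^ 2 + r ^ 2 * deriv φ y ^ 2) := by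
    rw [le_inv_mul_iff₀ hr, ← abs_of_pos hr, ← abs_mul, abs_of_pos hr, abs_le]
    constructor <;> nlinarith [sq_nonneg (φ y - r * deriv φ y), sq_nonneg (φ y + r * deriv φ y)]
  calc ENNReal.ofReal (φ t ^ 2) = ‖φ t ^ 2‖ₑ := (Real.enorm_of_nonneg (sq_nonneg _)).symm
    _ ≤ ∫⁻ y in Set.Iic t, ‖deriv (fun y ↦ φ y ^ 2) y‖ₑ :=
        (hφs.comp_left (g := (· ^ 2)) (by simp)).enorm_le_lintegral_Ici_deriv (hφ.pow 2) t
    _ ≤ ∫⁻ y, ‖deriv (fun y ↦ φ y ^ 2) y‖ₑ := setLIntegral_le_lintegral _ _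
    _ ≤ ∫⁻ y, ENNReal.ofReal r⁻¹ *
          (ENNReal.ofReal (φ y ^ 2) + ENNReal.ofReal (r ^ 2) * ENNReal.ofReal (deriv φ y ^ 2)) := by
        gcongr with y
        rw [hderiv, ← ENNReal.ofReal_mul (by positivity), ← ENNReal.ofReal_add (by positivity)
          (by positivity), ← ENNReal.ofReal_mul (by positivity), Real.enorm_eq_ofReal_abs]
        exact ENNReal.ofReal_le_ofReal (young y)
    _ = _ := by
        rw [lintegral_const_mul _ (by fun_prop), lintegral_add_left hsq,
          lintegral_const_mul _ hderivSq]

lemma integral_mul_log_le_of_le_lmarginal [Fintype ι]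
    {f : (∀ i, X i) → ℝ} {g : ι → (∀ i, X i) → ℝ} (hr : 0 < r)
    (hf : Measurable f) (hg : ∀ i, Measurable (g i)) (hf_nonneg : 0 ≤ f) (hg_nonneg : ∀ i, 0 ≤ g i)
    (hf_int : Integrable f (.pi μ)) (hg_int : ∀ i, Integrable (g i) (.pi μ))
    (hf_log : Integrable (fun x ↦ f x * Real.log (f x)) (.pi μ))
    (hf₀ : ∀ x, f x ≠ 0 → ∀ s, (∫⋯∫⁻_s, (fun y ↦ .ofReal (f y)) ∂μ) x ≠ 0)
    (hft : ∀ x s, (∫⋯∫⁻_s, (fun y ↦ .ofReal (f y)) ∂μ) x ≠ ∞)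
    (hgt : ∀ i x s, (∫⋯∫⁻_s, (fun y ↦ .ofReal (g i y)) ∂μ) x ≠ ∞)
    (h : ∀ i x, .ofReal (f x) ≤ ENNReal.ofReal r⁻¹ * ((∫⋯∫⁻_{i}, (fun y ↦ .ofReal (f y)) ∂μ) x +
      .ofReal (r ^ 2) * (∫⋯∫⁻_{i}, (fun y ↦ .ofReal (g i y)) ∂μ) x)) :
    ∫ x, f x * Real.log (f x) ∂.pi μ ≤
      (∫ x, f x ∂.pi μ) * Real.log (∫ x, f x ∂.pi μ) -
        Fintype.card ι * Real.log r * (∫ x, f x ∂.pi μ) + r ^ 2 * ∑ i, ∫ x, g i x ∂.pi μ := by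
  have hfm := hf.ennreal_ofReal
  have hgm i := (hg i).ennreal_ofReal
  obtain ⟨t, ht⟩ := exists_log_le_log_lmarginal_add_sum hr hfm hgm
    (fun x hx ↦ hf₀ x (by simpa using fun h0 ↦ hx (by simp [h0]))) hft hgt h .univ
  let R i x := ENNReal.ofReal (f x) *
    ((∫⋯∫⁻_t i, (fun y ↦ .ofReal (g i y)) ∂μ) x / (∫⋯∫⁻_t i, (fun y ↦ .ofReal (f y)) ∂μ) x)
  have hR_int i : Integrable (fun x ↦ (R i x).toReal) (.pi μ) :=
    integrable_toReal_mul_lmarginal_div_lmarginal (t i) hfm (hgm i)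
      (hg_int i).lintegral_lt_top.ne
  have hR_le i : ∫ x, (R i x).toReal ∂.pi μ ≤ ∫ x, g i x ∂.pi μ := by
    rw [integral_eq_lintegral_of_nonneg_ae (.of_forall (hg_nonneg i)) (hg i).aestronglyMeasurable]
    exact integral_toReal_mul_lmarginal_div_lmarginal_le (t i) hfm (hgm i)
      (hg_int i).lintegral_lt_top.ne
  set a := Real.log (∫ x, f x ∂.pi μ) - Fintype.card ι * Real.log r
  have hpointwise x : f x * Real.log (f x) ≤ a * f x + r ^ 2 * ∑ i, (R i x).toReal := by
    rcases eq_or_ne (f x) 0 with hx | hx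
    · simp [R, hx]
    · have hlog := ht x (by simpa using (hf_nonneg x).lt_of_ne' hx)
      simp only [lmarginal_univ, ENNReal.toReal_ofReal (hf_nonneg x), Finset.card_univ, ←
        integral_eq_lintegral_of_nonneg_ae (.of_forall hf_nonneg) hf.aestronglyMeasurable] at hlog
      simp only [R, ENNReal.toReal_mul, ENNReal.toReal_ofReal (hf_nonneg x), ← Finset.mul_sum]
      linarith [mul_le_mul_of_nonneg_left hlog (hf_nonneg x)]
  have hf_mul_int := hf_int.const_mul a
  have hR_sum_int := (integrable_finsetSum .univ fun i _ ↦ hR_int i).const_mul (r ^ 2)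
  calc ∫ x, f x * Real.log (f x) ∂.pi μ
      ≤ ∫ x, (a * f x + r ^ 2 * ∑ i, (R i x).toReal) ∂.pi μ :=
        integral_mono hf_log (hf_mul_int.add hR_sum_int) hpointwise
    _ = a * (∫ x, f x ∂.pi μ) + r ^ 2 * ∑ i, ∫ x, (R i x).toReal ∂.pi μ := by
        rw [integral_add hf_mul_int hR_sum_int, integral_const_mul, integral_const_mul,
          integral_finsetSum _ fun i _ ↦ hR_int i]
    _ ≤ a * (∫ x, f x ∂.pi μ) + r ^ 2 * ∑ i, ∫ x, g i x ∂.pi μ := by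
        have := Finset.sum_le_sum fun i (_ : i ∈ Finset.univ) ↦ hR_le i
        gcongr
    _ = _ := by ring

lemma ofReal_sq_le_lmarginal_sq_add_lmarginal_fderiv_sq [Fintype ι]
    {w : (ι → ℝ) → ℝ} (hw : ContDiff ℝ 1 w) (hws : HasCompactSupport w) (hr : 0 < r)
    (i : ι) (x : ι → ℝ) :
    ENNReal.ofReal (w x ^ 2) ≤ ENNReal.ofReal r⁻¹ *
      ((∫⋯∫⁻_{i}, (fun y ↦ .ofReal (w y ^ 2)) ∂fun _ ↦ volume) x + ENNReal.ofReal (r ^ 2) *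
        (∫⋯∫⁻_{i}, (fun y ↦ .ofReal (fderiv ℝ w y (Pi.single i 1) ^ 2)) ∂fun _ ↦ volume) x) := by
  have hderiv (t : ℝ) :
      deriv (w ∘ update x i) t = fderiv ℝ w (update x i t) (Pi.single i 1) := by
    rw [fderiv_comp_deriv t (hw.differentiable one_ne_zero).differentiableAt
      (hasDerivAt_update x i t).differentiableAt, deriv_update]
  have hslice := ofReal_sq_le_lintegral_sq_add_lintegral_deriv_sq
    (hw.comp (contDiff_update 1 x i)) (hws.comp_isClosedEmbedding (isClosedEmbedding_update x i))
    hr (x i)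
  simpa only [lmarginal_singleton, hderiv, comp_apply, update_eq_self] using hslice

lemma continuous_fderiv_apply_sq {F : Type*} [NormedAddCommGroup F] [NormedSpace ℝ F] {w : F → ℝ}
    (hw : ContDiff ℝ 1 w) (e : F) : Continuous fun x ↦ fderiv ℝ w x e ^ 2 :=
  ((hw.continuous_fderiv one_ne_zero).clm_apply continuous_const).pow 2

lemma hasCompactSupport_fderiv_apply_sq {F : Type*} [NormedAddCommGroup F] [NormedSpace ℝ F]
    {w : F → ℝ} (hws : HasCompactSupport w) (e : F) :
    HasCompactSupport fun x ↦ fderiv ℝ w x e ^ 2 :=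
  (hws.fderiv_apply ℝ e).comp_left (g := (· ^ 2)) (by simp)

lemma integral_sq_mul_log_sq_le_pi [Fintype ι]
    {w : (ι → ℝ) → ℝ} (hw : ContDiff ℝ 1 w) (hws : HasCompactSupport w) (hr : 0 < r) :
    ∫ x, w x ^ 2 * Real.log (w x ^ 2) ≤
      (∫ x, w x ^ 2) * Real.log (∫ x, w x ^ 2) - Fintype.card ι * Real.log r * (∫ x, w x ^ 2) +
        r ^ 2 * ∑ i, ∫ x, fderiv ℝ w x (Pi.single i 1) ^ 2 := by
  have hsq : Continuous fun x ↦ w x ^ 2 := hw.continuous.pow 2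
  have hsqs : HasCompactSupport fun x ↦ w x ^ 2 := hws.comp_left (g := (· ^ 2)) (by simp)
  have hgrad i := continuous_fderiv_apply_sq hw (Pi.single i 1)
  have hgrads i := hasCompactSupport_fderiv_apply_sq hws (Pi.single i 1)
  refine integral_mul_log_le_of_le_lmarginal hr hsq.measurable (fun i ↦ (hgrad i).measurable)
    (fun x ↦ sq_nonneg _) (fun i x ↦ sq_nonneg _) (hsq.integrable_of_hasCompactSupport hsqs)
    (fun i ↦ (hgrad i).integrable_of_hasCompactSupport (hgrads i)) ?_ ?_
    (fun x s ↦ lmarginal_ofReal_ne_top hsq hsqs s x)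
    (fun i x s ↦ lmarginal_ofReal_ne_top (hgrad i) (hgrads i) s x)
    (ofReal_sq_le_lmarginal_sq_add_lmarginal_fderiv_sq hw hws hr)
  · exact (Real.continuous_mul_log.comp hsq).integrable_of_hasCompactSupport
      (hsqs.comp_left (g := fun y ↦ y * Real.log y) (by simp))
  · exact fun x hx s ↦ lmarginal_ne_zero_of_continuous (ENNReal.continuous_ofReal.comp hsq)
      hsq.measurable.ennreal_ofReal (by simpa using hx) s

variable {E : Type*} [NormedAddCommGroup E] [InnerProductSpace ℝ E] [FiniteDimensional ℝ E]
  [MeasurableSpace E] [BorelSpace E]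

theorem integral_sq_mul_log_sq_le {w : E → ℝ} (hw : ContDiff ℝ 1 w) (hws : HasCompactSupport w)
    (hr : 0 < r) :
    ∫ x, w x ^ 2 * Real.log (w x ^ 2) ≤
      (∫ x, w x ^ 2) * Real.log (∫ x, w x ^ 2) -
        Module.finrank ℝ E * Real.log r * (∫ x, w x ^ 2) + r ^ 2 * ∫ x, ‖fderiv ℝ w x‖ ^ 2 := by
  let b := stdOrthonormalBasis ℝ E
  let L : (Fin (Module.finrank ℝ E) → ℝ) ≃L[ℝ] E :=
    (EuclideanSpace.equiv _ ℝ).symm.trans b.repr.symm.toContinuousLinearEquiv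
  have hLb i : L (Pi.single i 1) = b i := by simp [L]
  have hL : MeasurePreserving L :=
    b.measurePreserving_repr_symm.comp (PiLp.volume_preserving_toLp _)
  have hintegral (F : E → ℝ) : ∫ y, F (L y) = ∫ x, F x :=
    hL.integral_comp L.toHomeomorph.measurableEmbedding F
  have hfderiv y i : fderiv ℝ (w ∘ L) y (Pi.single i 1) = fderiv ℝ w (L y) (b i) := by
    simp [L.comp_right_fderiv, hLb]
  have hgrad_int i : Integrable fun x ↦ fderiv ℝ w x (b i) ^ 2 :=
    (continuous_fderiv_apply_sq hw (b i)).integrable_of_hasCompactSupport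
      (hasCompactSupport_fderiv_apply_sq hws (b i))
  have hgrad i : ∫ y, fderiv ℝ w (L y) (b i) ^ 2 = ∫ x, fderiv ℝ w x (b i) ^ 2 :=
    hintegral fun x ↦ fderiv ℝ w x (b i) ^ 2
  have hpi := integral_sq_mul_log_sq_le_pi (hw.comp L.contDiff)
    (hws.comp_homeomorph L.toHomeomorph) hr
  simp only [hfderiv, comp_apply, Fintype.card_fin, hintegral fun x ↦ w x ^ 2 * Real.log (w x ^ 2),
    hintegral fun x ↦ w x ^ 2, hgrad] at hpi
  simpa only [b.norm_dual, Real.norm_eq_abs, sq_abs, integral_finsetSum _ fun i _ ↦ hgrad_int i]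
    using hpi

lemma half_integral_sq_mul_log_sq_le {w : E → ℝ} (hw : ContDiff ℝ 1 w) (hws : HasCompactSupport w)
    {ε : ℝ} (hε : 0 < ε) :
    1 / 2 * ∫ x, w x ^ 2 * Real.log (w x ^ 2) ≤
      ε / 2 * (∫ x, ‖fderiv ℝ w x‖ ^ 2)
        + (Module.finrank ℝ E / 4 : ℝ) * Real.log (1 / ε) * (∫ x, w x ^ 2)
        + (∫ x, w x ^ 2) * Real.log (Real.sqrt (∫ x, w x ^ 2)) := by
  have h := integral_sq_mul_log_sq_le hw hws (Real.sqrt_pos.2 hε)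
  rw [Real.sq_sqrt hε.le, Real.log_sqrt hε.le] at h
  rw [Real.log_sqrt (integral_nonneg fun x ↦ sq_nonneg (w x)), one_div ε, Real.log_inv]
  linarith

end LogSobolev

lemma log_le_rpow_div_exp_one {y β : ℝ} (hy : 0 ≤ y) (hβ : 0 < β) :
    Real.log y ≤ y ^ β / (β * Real.exp 1) := by
  rcases hy.eq_or_lt with rfl | hy
  · simp [Real.zero_rpow hβ.ne']
  · rw [le_div_iff₀ (by positivity), Real.rpow_def_of_pos hy]
    linarith [Real.exp_one_mul_le_exp (x := Real.log y * β)]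

lemma mul_log_le_mul_log_add_rpow_mul_rpow {a b β : ℝ} (ha : 0 ≤ a) (hb : 0 < b) (hβ : 0 < β) :
    a * Real.log b ≤ a * Real.log a + 1 / (β * Real.exp 1) * (a ^ (1 - β) * b ^ β) := by
  rcases ha.eq_or_lt with rfl | ha
  · simp only [zero_mul, zero_add]
    positivity
  · calc a * Real.log b = a * Real.log a + a * Real.log (b / a) := by
          rw [Real.log_div hb.ne' ha.ne']; ring
      _ ≤ a * Real.log a + a * ((b / a) ^ β / (β * Real.exp 1)) := by
          gcongr
          exact log_le_rpow_div_exp_one (by positivity) hβ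
      _ = _ := by
          rw [Real.div_rpow hb.le ha.le, Real.rpow_sub ha, Real.rpow_one]
          ring

lemma max_rpow_le_add_rpow {a b β : ℝ} (ha : 0 ≤ a) (hb : 0 ≤ b) :
    max a b ^ β ≤ a ^ β + b ^ β := by
  rcases max_choice a b with h | h <;> rw [h]
  · exact le_add_of_nonneg_right (by positivity)
  · exact le_add_of_nonneg_left (by positivity)

lemma log_max_one_max_abs (a b : ℝ) :
    Real.log (max 1 (max |a| |b|)) = 1 / 2 * Real.log (max 1 (max (a ^ 2) (b ^ 2))) := by
  have hsq {s t : ℝ} (hs : 0 ≤ s) (ht : 0 ≤ t) : max s t ^ 2 = max (s ^ 2) (t ^ 2) :=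
    pow_left_monotoneOn.map_max hs ht
  rw [← sq_abs a, ← sq_abs b, ← hsq (abs_nonneg a) (abs_nonneg b), ← one_pow (M := ℝ) 2,
    ← hsq zero_le_one (by positivity), Real.log_pow, one_pow]
  push_cast
  ring

lemma mul_log_max_one_max_abs_le {c a b α : ℝ} (hc : 0 ≤ c) (hα : α < 1) :
    c * Real.log (max 1 (max |a| |b|)) ≤ 1 / 2 * (c * Real.log c) +
      1 / (2 * (1 - α) * Real.exp 1) *
        (c ^ α * (a ^ 2) ^ (1 - α) + c ^ α * (b ^ 2) ^ (1 - α) + c ^ α * 1 ^ (1 - α)) := by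
  have hβ : 0 < 1 - α := by linarith
  have hmax : max 1 (max (a ^ 2) (b ^ 2)) ^ (1 - α) ≤
      1 ^ (1 - α) + ((a ^ 2) ^ (1 - α) + (b ^ 2) ^ (1 - α)) := 
    (max_rpow_le_add_rpow (by positivity) (by positivity)).trans
      (add_le_add_right (max_rpow_le_add_rpow (by positivity) (by positivity)) _)
  calc c * Real.log (max 1 (max |a| |b|))
      = 1 / 2 * (c * Real.log (max 1 (max (a ^ 2) (b ^ 2)))) := by
        rw [log_max_one_max_abs]; ring
    _ ≤ 1 / 2 * (c * Real.log c + 1 / ((1 - α) * Real.exp 1) * (c ^ (1 - (1 - α)) *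
          (1 ^ (1 - α) + ((a ^ 2) ^ (1 - α) + (b ^ 2) ^ (1 - α))))) := by
        refine mul_le_mul_of_nonneg_left ((mul_log_le_mul_log_add_rpow_mul_rpow hc
          (by positivity) hβ).trans ?_) (by norm_num)
        gcongr
    _ = _ := by
        rw [sub_sub_cancel]
        field_simp
        ring

section Holder

variable {X : Type*} [MeasurableSpace X] {μ : Measure X} {f g : X → ℝ} {p q : ℝ}

lemma lintegral_ofReal_rpow_mul_rpow_le (hf : Integrable f μ) (hg : Integrable g μ)
    (hf₀ : 0 ≤ f) (hg₀ : 0 ≤ g) (hp : 0 ≤ p) (hq : 0 ≤ q) (hpq : p + q = 1) :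
    ∫⁻ x, .ofReal (f x ^ p * g x ^ q) ∂μ ≤
      ENNReal.ofReal ((∫ x, f x ∂μ) ^ p * (∫ x, g x ∂μ) ^ q) := by
  have h := ENNReal.lintegral_mul_norm_pow_le hf.aemeasurable.ennreal_ofReal
    hg.aemeasurable.ennreal_ofReal hp hq hpq
  rw [← ofReal_integral_eq_lintegral_ofReal hf (.of_forall hf₀),
    ← ofReal_integral_eq_lintegral_ofReal hg (.of_forall hg₀),
    ENNReal.ofReal_rpow_of_nonneg (integral_nonneg hf₀) hp,
    ENNReal.ofReal_rpow_of_nonneg (integral_nonneg hg₀) hq,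
    ← ENNReal.ofReal_mul (Real.rpow_nonneg (integral_nonneg hf₀) _)] at h
  simpa only [ENNReal.ofReal_rpow_of_nonneg (hf₀ _) hp, ENNReal.ofReal_rpow_of_nonneg (hg₀ _) hq,
    ← ENNReal.ofReal_mul (Real.rpow_nonneg (hf₀ _) _)] using h

lemma integrable_rpow_mul_rpow (hf : Integrable f μ) (hg : Integrable g μ)
    (hf₀ : 0 ≤ f) (hg₀ : 0 ≤ g) (hp : 0 ≤ p) (hq : 0 ≤ q) (hpq : p + q = 1) :
    Integrable (fun x ↦ f x ^ p * g x ^ q) μ :=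
  (lintegral_ofReal_ne_top_iff_integrable
    ((hf.aemeasurable.pow_const p).mul (hg.aemeasurable.pow_const q)).aestronglyMeasurable
    (.of_forall fun x ↦ mul_nonneg (Real.rpow_nonneg (hf₀ x) p) (Real.rpow_nonneg (hg₀ x) q))).1 <|
    ne_top_of_le_ne_top ENNReal.ofReal_ne_top
      (lintegral_ofReal_rpow_mul_rpow_le hf hg hf₀ hg₀ hp hq hpq)

lemma integral_rpow_mul_rpow_le (hf : Integrable f μ) (hg : Integrable g μ)
    (hf₀ : 0 ≤ f) (hg₀ : 0 ≤ g) (hp : 0 ≤ p) (hq : 0 ≤ q) (hpq : p + q = 1) :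
    ∫ x, f x ^ p * g x ^ q ∂μ ≤ (∫ x, f x ∂μ) ^ p * (∫ x, g x ∂μ) ^ q := by
  have hnonneg : 0 ≤ (∫ x, f x ∂μ) ^ p * (∫ x, g x ∂μ) ^ q :=
    mul_nonneg (Real.rpow_nonneg (integral_nonneg hf₀) p) (Real.rpow_nonneg (integral_nonneg hg₀) q)
  rw [← ENNReal.ofReal_le_ofReal_iff hnonneg, ofReal_integral_eq_lintegral_ofReal
    (integrable_rpow_mul_rpow hf hg hf₀ hg₀ hp hq hpq)
    (.of_forall fun x ↦ mul_nonneg (Real.rpow_nonneg (hf₀ x) p) (Real.rpow_nonneg (hg₀ x) q))]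
  exact lintegral_ofReal_rpow_mul_rpow_le hf hg hf₀ hg₀ hp hq hpq

lemma integral_mul_log_max_one_max_abs_le [IsFiniteMeasure μ] {u v : X → ℝ} {α : ℝ}
    (hf : Integrable f μ) (hf₀ : 0 ≤ f) (hflog : Integrable (fun x ↦ f x * Real.log (f x)) μ)
    (hu : MemLp u 2 μ) (hv : MemLp v 2 μ) (hα₀ : 0 ≤ α) (hα₁ : α < 1) :
    ∫ x, f x * Real.log (max 1 (max |u x| |v x|)) ∂μ ≤
      1 / 2 * (∫ x, f x * Real.log (f x) ∂μ) + 1 / (2 * (1 - α) * Real.exp 1) *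
        ((∫ x, f x ∂μ) ^ α * (∫ x, u x ^ 2 ∂μ) ^ (1 - α) +
          (∫ x, f x ∂μ) ^ α * (∫ x, v x ^ 2 ∂μ) ^ (1 - α) +
          (∫ x, f x ∂μ) ^ α * μ.real .univ ^ (1 - α)) := by
  have hβ : 0 < 1 - α := sub_pos.2 hα₁
  have hα : α + (1 - α) = 1 := by ring
  have hone : (0 : X → ℝ) ≤ fun _ ↦ 1 := fun _ ↦ zero_le_one
  have hrpow_int {h : X → ℝ} (hh : Integrable h μ) (hh₀ : 0 ≤ h) :=
    integrable_rpow_mul_rpow hf hh hf₀ hh₀ hα₀ hβ.le hα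
  have holder {h : X → ℝ} (hh : Integrable h μ) (hh₀ : 0 ≤ h) :=
    integral_rpow_mul_rpow_le hf hh hf₀ hh₀ hα₀ hβ.le hα
  have hu_int := hrpow_int hu.integrable_sq fun x ↦ sq_nonneg (u x)
  have hv_int := hrpow_int hv.integrable_sq fun x ↦ sq_nonneg (v x)
  have hone_int := hrpow_int (integrable_const 1) hone
  have huv_int : Integrable
      (fun x ↦ f x ^ α * (u x ^ 2) ^ (1 - α) + f x ^ α * (v x ^ 2) ^ (1 - α)) μ := hu_int.add hv_int
  have hsum_int : Integrable (fun x ↦ 1 / (2 * (1 - α) * Real.exp 1) *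
      (f x ^ α * (u x ^ 2) ^ (1 - α) + f x ^ α * (v x ^ 2) ^ (1 - α) + f x ^ α * 1 ^ (1 - α))) μ :=
    (huv_int.add hone_int).const_mul _
  refine (integral_mono_of_nonneg (.of_forall fun x ↦ mul_nonneg (hf₀ x)
    (Real.log_nonneg (le_max_left _ _))) ((hflog.const_mul (1 / 2)).add hsum_int)
    (.of_forall fun x ↦ mul_log_max_one_max_abs_le (hf₀ x) hα₁)).trans ?_
  rw [integral_add' (hflog.const_mul _) hsum_int, integral_const_mul, integral_const_mul,
    integral_add huv_int hone_int, integral_add hu_int hv_int]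
  have hu_le := holder hu.integrable_sq fun x ↦ sq_nonneg (u x)
  have hv_le := holder hv.integrable_sq fun x ↦ sq_nonneg (v x)
  have hone_le := holder (integrable_const 1) hone
  simp only [integral_const, smul_eq_mul, mul_one] at hone_le
  gcongr

end Holder

theorem log_plus_difference_estimate_general
    {E : Type*} [NormedAddCommGroup E] [InnerProductSpace ℝ E] [FiniteDimensional ℝ E]
    [MeasurableSpace E] [BorelSpace E] {D : Set E} (hD : volume D ≠ ∞) {u v : E → ℝ}
    (hu : MemLp u 2) (hv : MemLp v 2) (huv : ContDiff ℝ 1 fun x ↦ u x - v x)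
    (huvs : HasCompactSupport fun x ↦ u x - v x) (huvD : ∀ x ∉ D, u x = v x)
    {ε : ℝ} (hε : 0 < ε) {α : ℝ} (hα₀ : 0 ≤ α) (hα₁ : α < 1) :
    (∫ x in D, (u x - v x) ^ 2 * Real.log (max 1 (max |u x| |v x|))) ≤
      ε / 2 * (∫ x, ‖fderiv ℝ (fun y ↦ u y - v y) x‖ ^ 2)
        + (Module.finrank ℝ E / 4 : ℝ) * Real.log (1 / ε) * (∫ x, (u x - v x) ^ 2)
        + (∫ x, (u x - v x) ^ 2) * Real.log (Real.sqrt (∫ x, (u x - v x) ^ 2))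
        + (1 / (2 * (1 - α) * Real.exp 1)) *
            ((∫ x, u x ^ 2) ^ (1 - α) + (∫ x, v x ^ 2) ^ (1 - α)) *
            (∫ x, (u x - v x) ^ 2) ^ α
        + (1 / (2 * (1 - α) * Real.exp 1)) * (volume D).toReal ^ (1 - α) *
            (∫ x, (u x - v x) ^ 2) ^ α := by
  have : IsFiniteMeasure (volume.restrict D) := isFiniteMeasure_restrict.2 hD
  have hsq : Continuous fun x ↦ (u x - v x) ^ 2 := huv.continuous.pow 2
  have hsqs : HasCompactSupport fun x ↦ (u x - v x) ^ 2 :=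
    huvs.comp_left (g := (· ^ 2)) (by simp)
  have hsq_int : Integrable fun x ↦ (u x - v x) ^ 2 := hsq.integrable_of_hasCompactSupport hsqs
  have hlog_int : Integrable fun x ↦ (u x - v x) ^ 2 * Real.log ((u x - v x) ^ 2) :=
    (Real.continuous_mul_log.comp hsq).integrable_of_hasCompactSupport
      (hsqs.comp_left (g := fun y ↦ y * Real.log y) (by simp))
  have hlogD : ∫ x in D, (u x - v x) ^ 2 * Real.log ((u x - v x) ^ 2) =
      ∫ x, (u x - v x) ^ 2 * Real.log ((u x - v x) ^ 2) :=
    setIntegral_eq_integral_of_forall_compl_eq_zero fun x hx ↦ by simp [huvD x hx]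
  have hsqD {w : E → ℝ} (hw : Integrable fun x ↦ w x ^ 2) : ∫ x in D, w x ^ 2 ≤ ∫ x, w x ^ 2 :=
    setIntegral_le_integral hw (.of_forall fun x ↦ sq_nonneg (w x))
  have : 0 < 1 - α := sub_pos.2 hα₁
  calc ∫ x in D, (u x - v x) ^ 2 * Real.log (max 1 (max |u x| |v x|))
      ≤ 1 / 2 * (∫ x in D, (u x - v x) ^ 2 * Real.log ((u x - v x) ^ 2)) +
        1 / (2 * (1 - α) * Real.exp 1) *
        ((∫ x in D, (u x - v x) ^ 2) ^ α * (∫ x in D, u x ^ 2) ^ (1 - α) +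
          (∫ x in D, (u x - v x) ^ 2) ^ α * (∫ x in D, v x ^ 2) ^ (1 - α) +
          (∫ x in D, (u x - v x) ^ 2) ^ α * (volume.restrict D).real .univ ^ (1 - α)) :=
        integral_mul_log_max_one_max_abs_le hsq_int.restrict (fun x ↦ sq_nonneg _) hlog_int.restrict
          (hu.restrict D) (hv.restrict D) hα₀ hα₁
    _ ≤ 1 / 2 * (∫ x, (u x - v x) ^ 2 * Real.log ((u x - v x) ^ 2)) +
        1 / (2 * (1 - α) * Real.exp 1) *
        ((∫ x, (u x - v x) ^ 2) ^ α * (∫ x, u x ^ 2) ^ (1 - α) +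
          (∫ x, (u x - v x) ^ 2) ^ α * (∫ x, v x ^ 2) ^ (1 - α) +
          (∫ x, (u x - v x) ^ 2) ^ α * (volume D).toReal ^ (1 - α)) := by
        rw [hlogD, measureReal_restrict_apply_univ, measureReal_def]
        gcongr _ + _ * (?_ ^ α * ?_ ^ _ + ?_ ^ α * ?_ ^ _ + ?_ ^ α * _)
        exacts [hsqD hsq_int, hsqD hu.integrable_sq, hsqD hsq_int,
          hsqD hv.integrable_sq, hsqD hsq_int]
    _ ≤ _ := by
        linarith [half_integral_sq_mul_log_sq_le huv huvs hε]

/-- For smooth `u, v` compactly supported in a bounded measurable set `D`, `ε > 0`,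
`α ∈ (0,1)`:
`∫_D |u−v|² log₊(max(|u|,|v|)) ≤ ε ‖u−v‖_V² + (d/4) log(1/ε) ‖u−v‖² + ‖u−v‖² log‖u−v‖
  + (1/(2(1−α)e)) (‖u‖^{2(1−α)} + ‖v‖^{2(1−α)}) ‖u−v‖^{2α}
  + (1/(2(1−α)e)) (4 m(D))^{1−α} ‖u−v‖^{2α}`. -/
theorem log_plus_difference_estimate
    (d : ℕ) (hd : 1 ≤ d)
    (D : Set (EuclideanSpace ℝ (Fin d)))
    (hDmeas : MeasurableSet D) (hDbdd : Bornology.IsBounded D)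
    (u v : EuclideanSpace ℝ (Fin d) → ℝ)
    (hu : ContDiff ℝ (⊤ : ℕ∞) u) (husupp : HasCompactSupport u) (husuppD : tsupport u ⊆ D)
    (hv : ContDiff ℝ (⊤ : ℕ∞) v) (hvsupp : HasCompactSupport v) (hvsuppD : tsupport v ⊆ D)
    (ε : ℝ) (hε : 0 < ε) (α : ℝ) (hα0 : 0 < α) (hα1 : α < 1) :
    (∫ x in D, (u x - v x) ^ 2 * Real.log (max 1 (max |u x| |v x|))) ≤
      ε * (∫ x, ‖fderiv ℝ (fun y => u y - v y) x‖ ^ 2)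
        + (d / 4 : ℝ) * Real.log (1 / ε) * (∫ x, (u x - v x) ^ 2)
        + (∫ x, (u x - v x) ^ 2) * Real.log (Real.sqrt (∫ x, (u x - v x) ^ 2))
        + (1 / (2 * (1 - α) * Real.exp 1)) *
            ((∫ x, u x ^ 2) ^ (1 - α) + (∫ x, v x ^ 2) ^ (1 - α)) *
            (∫ x, (u x - v x) ^ 2) ^ α
        + (1 / (2 * (1 - α) * Real.exp 1)) * (4 * (volume D).toReal) ^ (1 - α) *
            (∫ x, (u x - v x) ^ 2) ^ α := by
  have huvD : ∀ x ∉ D, u x = v x := fun x hx ↦ by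
    rw [image_eq_zero_of_notMem_tsupport (mt (@husuppD x) hx),
      image_eq_zero_of_notMem_tsupport (mt (@hvsuppD x) hx)]
  refine (log_plus_difference_estimate_general hDbdd.measure_lt_top.ne
    (hu.continuous.memLp_of_hasCompactSupport husupp)
    (hv.continuous.memLp_of_hasCompactSupport hvsupp) ((hu.sub hv).of_le (by simp))
    (husupp.sub hvsupp) huvD hε hα0.le hα1).trans ?_
  have : 0 < 1 - α := sub_pos.2 hα1
  rw [finrank_euclideanSpace_fin]
  gcongr
  · exact half_le_self hε.le
  · exact le_mul_of_one_le_left ENNReal.toReal_nonneg (by norm_num)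
end

section
/- Let d ≥ 1, let D ⊆ ℝ^d be a bounded measurable set of Lebesgue measure m(D), and let σ : ℝ → ℝ satisfy |σ(x)| ≤ L₃ + L₄|x|·(log₊|x|)^{1/2} for all x ∈ ℝ, where L₃, L₄ > 0. Then for every smooth u : ℝ^d → ℝ with compact support contained in D and every θ > 0: ∫_D σ(u(x))² dx ≤ 2 L₃² m(D) + 2 L₄² · [ θ ∫ |∇u(x)|² dx + (d/4)·log(1/θ) · ‖u‖² + ‖u‖² · log‖u‖ + m(D)/(2e) ], where ‖u‖ denotes the L² norm of u and ‖u‖² log‖u‖ is interpreted as 0 when u ≡ 0. -/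
open MeasureTheory

/-!
The logarithmic Sobolev inequality comes from the Gagliardo-Nirenberg inequality
`∫ |f| ^ (n / (n - 1)) ≤ ∏ᵢ (∫ |∂ᵢf|) ^ (1 / (n - 1))`, that is, `sup |f| ≤ ∫ |f'|` if `n = 1`.
For `f ≥ 0` with integral `A`, Jensen's inequality turns it into the entropy bound
`∫ f log f ≤ A ∑ᵢ log (∫ |∂ᵢf|) - (n - 1) A log A`. If `f = u ^ 2`, then
`∫ |∂ᵢf| ≤ θ ^ (-1 / 2) (A + θ ∫ |∂ᵢu| ^ 2)` by Young's inequality, and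
`A log (A + t) ≤ A log A + t`, so that of the `n` terms `A log A` exactly one survives and the terms
`t` add up to `θ ∫ |∇u| ^ 2`. Replacing `log` by `log₊` in `u ^ 2 log |u|` costs at most `1 / (2e)`
at each point of `D`.
-/

open Fintype Function Module
open scoped ENNReal

section LoomisWhitney

variable {ι : Type*} [Fintype ι] [DecidableEq ι] {X : ι → Type*} [∀ i, MeasurableSpace (X i)]
  {μ : ∀ i, Measure (X i)} [∀ i, SigmaFinite (μ i)] {h : ι → (∀ i, X i) → ℝ≥0∞} {p : ℝ}

theorem lintegral_prod_lmarginal_insert_rpow_le (hp : (card ι : ℝ).HolderConjugate p)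
    (hm : ∀ i, Measurable (h i)) {s : Finset ι} {j : ι} (hj : j ∉ s) (x : ∀ i, X i) :
    ∫⁻ t, ∏ i, (∫⋯∫⁻_insert i s, h i ∂μ) (update x j t) ^ (p - 1) ∂μ j ≤
      ∏ i, (∫⋯∫⁻_insert i (insert j s), h i ∂μ) x ^ (p - 1) := by
  have hmeas (i : ι) :
      Measurable fun t ↦ (∫⋯∫⁻_insert i s, h i ∂μ) (update x j t) :=
    ((hm i).lmarginal μ).comp (measurable_update x)
  have hweights : ∑ _i ∈ Finset.univ.erase j, (p - 1) = 1 := by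
    rw [Finset.sum_const, Finset.card_erase_of_mem (Finset.mem_univ j), Finset.card_univ,
      nsmul_eq_mul, Nat.cast_pred (card_pos_iff.2 ⟨j⟩)]
    linear_combination hp.mul_eq_add
  calc ∫⁻ t, ∏ i, (∫⋯∫⁻_insert i s, h i ∂μ) (update x j t) ^ (p - 1) ∂μ j
      = (∫⋯∫⁻_insert j s, h j ∂μ) x ^ (p - 1) * ∫⁻ t, ∏ i ∈ Finset.univ.erase j,
          (∫⋯∫⁻_insert i s, h i ∂μ) (update x j t) ^ (p - 1) ∂μ j := by
        rw [← lintegral_const_mul _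
          (Finset.measurable_fun_prod _ fun i _ ↦ (hmeas i).pow_const _)]
        refine lintegral_congr fun t ↦ ?_
        rw [← Finset.mul_prod_erase _ _ (Finset.mem_univ j),
          lmarginal_update_of_mem _ (Finset.mem_insert_self j s)]
    _ ≤ (∫⋯∫⁻_insert j s, h j ∂μ) x ^ (p - 1) * ∏ i ∈ Finset.univ.erase j,
          (∫⁻ t, (∫⋯∫⁻_insert i s, h i ∂μ) (update x j t) ∂μ j) ^ (p - 1) := by
        gcongr
        exact ENNReal.lintegral_prod_norm_pow_le _ (fun i _ ↦ (hmeas i).aemeasurable) hweights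
          fun _ _ ↦ hp.symm.sub_one_pos.le
    _ = ∏ i, (∫⋯∫⁻_insert i (insert j s), h i ∂μ) x ^ (p - 1) := by
        rw [← Finset.mul_prod_erase _ _ (Finset.mem_univ j),
          Finset.insert_eq_of_mem (Finset.mem_insert_self j s)]
        congr 1
        refine Finset.prod_congr rfl fun i hi ↦ ?_
        have hji : j ∉ insert i s := by simp [hj, (Finset.ne_of_mem_erase hi).symm]
        rw [← lmarginal_insert (h i) (hm i) hji, Finset.insert_comm]

theorem lmarginal_prod_lmarginal_singleton_rpow_le (hp : (card ι : ℝ).HolderConjugate p)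
    (hm : ∀ i, Measurable (h i)) (s : Finset ι) (x : ∀ i, X i) :
    (∫⋯∫⁻_s, fun y ↦ ∏ i, (∫⋯∫⁻_{i}, h i ∂μ) y ^ (p - 1) ∂μ) x ≤
      ∏ i, (∫⋯∫⁻_insert i s, h i ∂μ) x ^ (p - 1) := by
  induction s using Finset.induction generalizing x with
  | empty => simp
  | insert j s hj ih =>
    rw [lmarginal_insert _
      (Finset.measurable_fun_prod _ fun i _ ↦ ((hm i).lmarginal μ).pow_const _) hj]
    exact (lintegral_mono fun t ↦ ih (update x j t)).trans
      (lintegral_prod_lmarginal_insert_rpow_le hp hm hj x)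

theorem lintegral_prod_lmarginal_singleton_rpow_le (hp : (card ι : ℝ).HolderConjugate p)
    (hm : ∀ i, Measurable (h i)) :
    ∫⁻ x, ∏ i, (∫⋯∫⁻_{i}, h i ∂μ) x ^ (p - 1) ∂Measure.pi μ ≤
      ∏ i, (∫⁻ x, h i x ∂Measure.pi μ) ^ (p - 1) := by
  cases isEmpty_or_nonempty (∀ i, X i)
  · simp
  · simpa only [lmarginal_univ, Finset.insert_eq_of_mem (Finset.mem_univ _)] using
      lmarginal_prod_lmarginal_singleton_rpow_le (μ := μ) hp hm Finset.univ (Classical.arbitrary _)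

end LoomisWhitney

section GagliardoNirenberg

variable {E F : Type*} [NormedAddCommGroup E] [NormedSpace ℝ E] [NormedAddCommGroup F]
  [NormedSpace ℝ F]

theorem continuous_fderiv_const_apply {f : E → F} (hf : ContDiff ℝ 1 f) (e : E) :
    Continuous fun x ↦ fderiv ℝ f x e :=
  (hf.continuous_fderiv one_ne_zero).clm_apply continuous_const

theorem integrable_fderiv_const_apply [MeasurableSpace E] [OpensMeasurableSpace E] {ν : Measure E}
    [IsFiniteMeasureOnCompacts ν] {f : E → F} (hf : ContDiff ℝ 1 f) (hs : HasCompactSupport f)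
    (e : E) : Integrable (fun x ↦ fderiv ℝ f x e) ν :=
  (continuous_fderiv_const_apply hf e).integrable_of_hasCompactSupport (hs.fderiv_apply ℝ e)

variable {ι : Type*} [Fintype ι] [DecidableEq ι] {f : (ι → ℝ) → F} {p : ℝ}

theorem enorm_le_lmarginal_enorm_fderiv (hf : ContDiff ℝ 1 f) (hs : HasCompactSupport f) (i : ι)
    (x : ι → ℝ) :
    ‖f x‖ₑ ≤ (∫⋯∫⁻_{i}, fun y ↦ ‖fderiv ℝ f y (Pi.single i 1)‖ₑ ∂fun _ ↦ volume) x := by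
  rw [lmarginal_singleton]
  calc ‖f x‖ₑ = ‖(f ∘ update x i) (x i)‖ₑ := by simp
    _ ≤ ∫⁻ t in Set.Iic (x i), ‖deriv (f ∘ update x i) t‖ₑ :=
        HasCompactSupport.enorm_le_lintegral_Ici_deriv (hf.comp (contDiff_update 1 x i))
          (hs.comp_isClosedEmbedding (isClosedEmbedding_update x i)) _
    _ ≤ ∫⁻ t, ‖deriv (f ∘ update x i) t‖ₑ := setLIntegral_le_lintegral _ _
    _ = ∫⁻ t, ‖fderiv ℝ f (update x i t) (Pi.single i 1)‖ₑ := by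
        refine lintegral_congr fun t ↦ ?_
        rw [fderiv_comp_deriv _ (hf.differentiable one_ne_zero).differentiableAt
          (hasDerivAt_update x i t).differentiableAt, deriv_update]

theorem lintegral_enorm_rpow_le_prod_lintegral_enorm_fderiv
    (hp : (card ι : ℝ).HolderConjugate p) (hf : ContDiff ℝ 1 f) (hs : HasCompactSupport f) :
    ∫⁻ x, ‖f x‖ₑ ^ p ≤ ∏ i, (∫⁻ x, ‖fderiv ℝ f x (Pi.single i 1)‖ₑ) ^ (p - 1) := by
  have hexp : (p - 1) * card ι = p := hp.symm.sub_one_mul_conj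
  calc ∫⁻ x, ‖f x‖ₑ ^ p = ∫⁻ x, ∏ _i : ι, ‖f x‖ₑ ^ (p - 1) := by
        refine lintegral_congr fun x ↦ ?_
        rw [Finset.prod_const, Finset.card_univ, ← ENNReal.rpow_natCast, ← ENNReal.rpow_mul, hexp]
    _ ≤ ∫⁻ x, ∏ i, (∫⋯∫⁻_{i}, fun y ↦ ‖fderiv ℝ f y (Pi.single i 1)‖ₑ ∂fun _ ↦ volume) x
          ^ (p - 1) := by
        gcongr with x i
        · exact hp.symm.sub_one_pos.le
        · exact enorm_le_lmarginal_enorm_fderiv hf hs i x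
    _ ≤ _ := lintegral_prod_lmarginal_singleton_rpow_le hp fun i ↦
        (continuous_fderiv_const_apply hf _).enorm.measurable

theorem integral_norm_rpow_le_prod_integral_norm_fderiv
    (hp : (card ι : ℝ).HolderConjugate p) (hf : ContDiff ℝ 1 f) (hs : HasCompactSupport f) :
    ∫ x, ‖f x‖ ^ p ≤ ∏ i, (∫ x, ‖fderiv ℝ f x (Pi.single i 1)‖) ^ (p - 1) := by
  have hp1 : 0 ≤ p - 1 := hp.symm.sub_one_pos.le
  have hnonneg (i : ι) : 0 ≤ ∫ x, ‖fderiv ℝ f x (Pi.single i 1)‖ := by positivity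
  rw [integral_eq_lintegral_of_nonneg_ae (.of_forall fun x ↦ by positivity)
    (hf.continuous.norm.rpow_const fun _ ↦ .inr hp.symm.nonneg).aestronglyMeasurable]
  refine ENNReal.toReal_le_of_le_ofReal (by positivity) ?_
  rw [ENNReal.ofReal_prod_of_nonneg fun i _ ↦ by positivity]
  simp_rw [← ENNReal.ofReal_rpow_of_nonneg (hnonneg _) hp1,
    ofReal_integral_norm_eq_lintegral_enorm (integrable_fderiv_const_apply hf hs _),
    ← ENNReal.ofReal_rpow_of_nonneg (norm_nonneg _) hp.symm.nonneg, ofReal_norm]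
  exact lintegral_enorm_rpow_le_prod_lintegral_enorm_fderiv hp hf hs

theorem norm_le_integral_norm_fderiv [Subsingleton ι] (hf : ContDiff ℝ 1 f)
    (hs : HasCompactSupport f) (i : ι) (x : ι → ℝ) :
    ‖f x‖ ≤ ∫ y, ‖fderiv ℝ f y (Pi.single i 1)‖ := by
  have huniv : ({i} : Finset ι) = Finset.univ := Finset.eq_univ_of_forall fun j ↦ by
    simp [Subsingleton.elim j i]
  have h := enorm_le_lmarginal_enorm_fderiv hf hs i x
  rw [huniv, lmarginal_univ, ← volume_pi, ← ofReal_norm,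
    ← ofReal_integral_norm_eq_lintegral_enorm (integrable_fderiv_const_apply hf hs _)] at h
  exact (ENNReal.ofReal_le_ofReal_iff (by positivity)).1 h

end GagliardoNirenberg

section Entropy

theorem mul_log_add_le {a b : ℝ} (ha : 0 < a) (hb : 0 ≤ b) :
    a * Real.log (a + b) ≤ a * Real.log a + b := by
  have h := Real.log_le_sub_one_of_pos (show 0 < (a + b) / a by positivity)
  rw [Real.log_div (by positivity) ha.ne', add_div, div_self ha.ne', add_sub_cancel_left,
    le_div_iff₀ ha] at h
  linarith

theorem sub_one_mul_integral_mul_log_le {α : Type*} [MeasurableSpace α] {ν : Measure α}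
    {f : α → ℝ} {p K : ℝ} (hf₀ : 0 ≤ f) (hf : Integrable f ν)
    (hfl : Integrable (fun x ↦ f x * Real.log (f x)) ν) (hfp : Integrable (fun x ↦ f x ^ p) ν)
    (hA : 0 < ∫ x, f x ∂ν) (hK : 0 < K) (hle : ∫ x, f x ^ p ∂ν ≤ K) :
    (p - 1) * ∫ x, f x * Real.log (f x) ∂ν ≤ (∫ x, f x ∂ν) * Real.log (K / ∫ x, f x ∂ν) := by
  set A := ∫ x, f x ∂ν
  -- The tangent line of `log` at `K / A`, evaluated at `f x ^ (p - 1)` and multiplied by `f x`.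
  have htangent (x : α) :
      (p - 1) * (f x * Real.log (f x)) ≤ A / K * f x ^ p + (Real.log (K / A) - 1) * f x := by
    have hfx : 0 ≤ f x := hf₀ x
    rcases hfx.eq_or_lt with h | h
    · rw [← h]
      simp only [zero_mul, mul_zero, add_zero]
      positivity
    · have hlog := Real.log_le_sub_one_of_pos (show 0 < f x ^ (p - 1) / (K / A) by positivity)
      rw [Real.log_div (by positivity) (by positivity), Real.log_rpow h] at hlog
      have hmul := mul_le_mul_of_nonneg_left hlog h.le
      have hpow : f x * (f x ^ (p - 1) / (K / A)) = A / K * f x ^ p := by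
        rw [Real.rpow_sub_one h.ne']
        field_simp [h.ne']
      linarith
  calc (p - 1) * ∫ x, f x * Real.log (f x) ∂ν
      = ∫ x, (p - 1) * (f x * Real.log (f x)) ∂ν := (integral_const_mul _ _).symm
    _ ≤ ∫ x, (A / K * f x ^ p + (Real.log (K / A) - 1) * f x) ∂ν :=
        integral_mono (hfl.const_mul _) ((hfp.const_mul _).add (hf.const_mul _)) htangent
    _ = A / K * ∫ x, f x ^ p ∂ν + (Real.log (K / A) - 1) * A := by
        rw [integral_add (hfp.const_mul _) (hf.const_mul _), integral_const_mul,
          integral_const_mul]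
    _ ≤ A / K * K + (Real.log (K / A) - 1) * A := by gcongr
    _ = A * Real.log (K / A) := by field_simp; ring

theorem integrable_comp_of_hasCompactSupport {α β F : Type*} [TopologicalSpace α]
    [MeasurableSpace α] [OpensMeasurableSpace α] {ν : Measure α} [IsFiniteMeasureOnCompacts ν]
    [TopologicalSpace β] [Zero β] [NormedAddCommGroup F] {u : α → β} {g : β → F}
    (hu : Continuous u) (hs : HasCompactSupport u) (hg : Continuous g) (hg₀ : g 0 = 0) :
    Integrable (fun x ↦ g (u x)) ν :=
  (hg.comp hu).integrable_of_hasCompactSupport (hs.comp_left hg₀)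

variable {ι : Type*} [Fintype ι] [DecidableEq ι] {f : (ι → ℝ) → ℝ} {C : ι → ℝ}

theorem integral_mul_log_le_of_holderConjugate {p : ℝ} (hp : (card ι : ℝ).HolderConjugate p)
    (hf : ContDiff ℝ 1 f) (hs : HasCompactSupport f) (hf₀ : 0 ≤ f)
    (hA : 0 < ∫ x, f x) (hC : ∀ i, 0 < C i)
    (hfC : ∀ i, ∫ x, ‖fderiv ℝ f x (Pi.single i 1)‖ ≤ C i) :
    ∫ x, f x * Real.log (f x) ≤
      (∫ x, f x) * ∑ i, Real.log (C i) - (card ι - 1) * ((∫ x, f x) * Real.log (∫ x, f x)) := by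
  have hp₀ : 0 < p := hp.symm.pos
  have hp₁ : 0 ≤ p - 1 := hp.symm.sub_one_pos.le
  have hK : ∫ x, f x ^ p ≤ ∏ i, C i ^ (p - 1) :=
    calc ∫ x, f x ^ p = ∫ x, ‖f x‖ ^ p := by simp_rw [Real.norm_of_nonneg (hf₀ _)]
      _ ≤ ∏ i, (∫ x, ‖fderiv ℝ f x (Pi.single i 1)‖) ^ (p - 1) :=
          integral_norm_rpow_le_prod_integral_norm_fderiv hp hf hs
      _ ≤ ∏ i, C i ^ (p - 1) := by
          gcongr with i
          exact hfC i
  have hK₀ : 0 < ∏ i, C i ^ (p - 1) := Finset.prod_pos fun i _ ↦ Real.rpow_pos_of_pos (hC i) _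
  have hjensen := sub_one_mul_integral_mul_log_le hf₀
    (hf.continuous.integrable_of_hasCompactSupport hs)
    (integrable_comp_of_hasCompactSupport hf.continuous hs Real.continuous_mul_log (by simp))
    (integrable_comp_of_hasCompactSupport hf.continuous hs
      (Real.continuous_rpow_const hp₀.le) (Real.zero_rpow hp₀.ne')) hA hK₀ hK
  have hlogK : Real.log (∏ i, C i ^ (p - 1)) = (p - 1) * ∑ i, Real.log (C i) := by
    rw [Real.log_prod fun i _ ↦ (Real.rpow_pos_of_pos (hC i) _).ne', Finset.mul_sum]
    simp_rw [Real.log_rpow (hC _)]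
  have hcard : (card ι - 1) * (p - 1) = 1 := by linear_combination hp.mul_eq_add
  rw [Real.log_div hK₀.ne' hA.ne', hlogK] at hjensen
  have hmul := mul_le_mul_of_nonneg_left hjensen hp.sub_one_pos.le
  linear_combination hmul + ((∫ x, f x) * ∑ i, Real.log (C i) - ∫ x, f x * Real.log (f x)) * hcard

theorem integral_mul_log_le_of_unique [Unique ι] {c : ℝ} (hf : ContDiff ℝ 1 f)
    (hs : HasCompactSupport f) (hf₀ : 0 ≤ f)
    (hfc : ∫ x, ‖fderiv ℝ f x (Pi.single default 1)‖ ≤ c) :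
    ∫ x, f x * Real.log (f x) ≤ (∫ x, f x) * Real.log c := by
  have hbound (x : ι → ℝ) : f x ≤ c :=
    ((le_abs_self _).trans (norm_le_integral_norm_fderiv hf hs default x)).trans hfc
  rw [← integral_mul_const]
  refine integral_mono
    (integrable_comp_of_hasCompactSupport hf.continuous hs Real.continuous_mul_log (by simp))
    ((hf.continuous.integrable_of_hasCompactSupport hs).mul_const _) fun x ↦ ?_
  rcases (hf₀ x).eq_or_lt with h | h
  · simp [← h]
  · exact mul_le_mul_of_nonneg_left (Real.log_le_log h (hbound x)) h.le

theorem integral_mul_log_le (hf : ContDiff ℝ 1 f) (hs : HasCompactSupport f) (hf₀ : 0 ≤ f)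
    (hA : 0 < ∫ x, f x) (hC : ∀ i, 0 < C i)
    (hfC : ∀ i, ∫ x, ‖fderiv ℝ f x (Pi.single i 1)‖ ≤ C i) :
    ∫ x, f x * Real.log (f x) ≤
      (∫ x, f x) * ∑ i, Real.log (C i) - (card ι - 1) * ((∫ x, f x) * Real.log (∫ x, f x)) := by
  rcases lt_trichotomy (card ι) 1 with h | h | h
  · have : IsEmpty ι := card_eq_zero_iff.1 (Nat.lt_one_iff.1 h)
    simp [Measure.volume_pi_eq_dirac (0 : ι → ℝ)]
  · have : Unique ι := (card_eq_one_iff_nonempty_unique.1 h).some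
    simpa [h] using integral_mul_log_le_of_unique hf hs hf₀ (hfC default)
  · exact integral_mul_log_le_of_holderConjugate
      (.conjExponent (Nat.one_lt_cast.2 h)) hf hs hf₀ hA hC hfC

end Entropy

section LogSobolev

theorem abs_two_mul_mul_le {θ : ℝ} (hθ : 0 < θ) (a b : ℝ) :
    |2 * a * b| ≤ (√θ)⁻¹ * (a ^ 2 + θ * b ^ 2) := by
  have hsq : |a| * (√θ * |b|) * 2 ≤ a ^ 2 + θ * b ^ 2 := by
    have h := two_mul_le_add_sq |a| (√θ * |b|)
    rw [mul_pow, Real.sq_sqrt hθ.le, sq_abs, sq_abs] at h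
    linarith
  rw [le_inv_mul_iff₀ (by positivity), abs_mul, abs_mul, abs_two]
  linarith

theorem integral_norm_fderiv_sq_le {E : Type*} [NormedAddCommGroup E] [NormedSpace ℝ E]
    [MeasurableSpace E] [OpensMeasurableSpace E] {ν : Measure E} [IsFiniteMeasureOnCompacts ν]
    {v : E → ℝ} (hv : ContDiff ℝ 1 v) (hs : HasCompactSupport v) (e : E) {θ : ℝ} (hθ : 0 < θ) :
    ∫ x, ‖fderiv ℝ (fun y ↦ v y ^ 2) x e‖ ∂ν ≤
      (√θ)⁻¹ * ((∫ x, v x ^ 2 ∂ν) + θ * ∫ x, fderiv ℝ v x e ^ 2 ∂ν) := by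
  have hv2 : Integrable (fun x ↦ v x ^ 2) ν :=
    integrable_comp_of_hasCompactSupport hv.continuous hs (continuous_pow 2) (by simp)
  have hd2 : Integrable (fun x ↦ fderiv ℝ v x e ^ 2) ν :=
    integrable_comp_of_hasCompactSupport (continuous_fderiv_const_apply hv e)
      (hs.fderiv_apply ℝ e) (continuous_pow 2) (by simp)
  rw [← integral_const_mul, ← integral_add hv2 (hd2.const_mul θ), ← integral_const_mul]
  refine integral_mono_of_nonneg (.of_forall fun x ↦ norm_nonneg _)
    ((hv2.add (hd2.const_mul θ)).const_mul _) (.of_forall fun x ↦ ?_)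
  have hderiv : fderiv ℝ (fun y ↦ v y ^ 2) x e = 2 * v x * fderiv ℝ v x e := by
    rw [fderiv_fun_pow _ (hv.differentiable one_ne_zero x)]
    simp
  simpa only [hderiv, Real.norm_eq_abs] using abs_two_mul_mul_le hθ (v x) (fderiv ℝ v x e)

theorem integral_sq_pos_of_ne_zero {E : Type*} [TopologicalSpace E] [MeasurableSpace E]
    [OpensMeasurableSpace E] {ν : Measure E} [IsFiniteMeasureOnCompacts ν] [ν.IsOpenPosMeasure]
    {v : E → ℝ} (hv : Continuous v) (hs : HasCompactSupport v) (h : v ≠ 0) :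
    0 < ∫ x, v x ^ 2 ∂ν := by
  obtain ⟨x, hx⟩ := ne_iff.1 h
  have hs2 : HasCompactSupport fun x ↦ v x ^ 2 := hs.comp_left (zero_pow two_ne_zero)
  exact (hv.pow 2).integral_pos_of_hasCompactSupport_nonneg_nonzero hs2
    (fun x ↦ sq_nonneg (v x)) (pow_ne_zero 2 hx)

theorem integral_sq_mul_log_le_sum_fderiv {ι : Type*} [Fintype ι] [DecidableEq ι]
    {v : (ι → ℝ) → ℝ} (hv : ContDiff ℝ 1 v) (hs : HasCompactSupport v) {θ : ℝ} (hθ : 0 < θ) :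
    ∫ x, v x ^ 2 * Real.log (v x) ≤
      θ / 2 * (∑ i, ∫ x, fderiv ℝ v x (Pi.single i 1) ^ 2)
        + card ι / 4 * Real.log (1 / θ) * (∫ x, v x ^ 2)
        + (∫ x, v x ^ 2) * Real.log √(∫ x, v x ^ 2) := by
  rcases eq_or_ne v 0 with rfl | hne
  · simp
  set A := ∫ x, v x ^ 2
  set B : ι → ℝ := fun i ↦ ∫ x, fderiv ℝ v x (Pi.single i 1) ^ 2
  have hA : 0 < A := integral_sq_pos_of_ne_zero hv.continuous hs hne
  have hB (i : ι) : 0 ≤ B i := by positivity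
  have hs2 : HasCompactSupport fun x ↦ v x ^ 2 := hs.comp_left (zero_pow two_ne_zero)
  have hentropy := integral_mul_log_le (C := fun i ↦ (√θ)⁻¹ * (A + θ * B i)) (hv.pow 2)
    hs2 (fun x ↦ sq_nonneg (v x)) hA (fun i ↦ by have := hB i; positivity) fun i ↦
      integral_norm_fderiv_sq_le hv hs _ hθ
  have hlog (i : ι) : A * Real.log ((√θ)⁻¹ * (A + θ * B i)) ≤
      A * Real.log A - A * (Real.log θ / 2) + θ * B i := by
    have hB' : 0 ≤ θ * B i := mul_nonneg hθ.le (hB i)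
    rw [Real.log_mul (by positivity) (by positivity), Real.log_inv, Real.log_sqrt hθ.le]
    linarith [mul_log_add_le hA hB']
  have hsum := Finset.sum_le_sum fun i (_ : i ∈ Finset.univ) ↦ hlog i
  rw [← Finset.mul_sum, Finset.sum_add_distrib, ← Finset.mul_sum, Finset.sum_const,
    Finset.card_univ, nsmul_eq_mul] at hsum
  have hsq : ∫ x, v x ^ 2 * Real.log (v x ^ 2) = 2 * ∫ x, v x ^ 2 * Real.log (v x) := by
    rw [← integral_const_mul]
    simp_rw [Real.log_pow, Nat.cast_ofNat, mul_left_comm (2 : ℝ)]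
  rw [hsq] at hentropy
  rw [Real.log_sqrt hA.le, one_div, Real.log_inv]
  linarith

variable {E : Type*} [NormedAddCommGroup E] [InnerProductSpace ℝ E] [FiniteDimensional ℝ E]

theorem sum_sq_apply_orthonormalBasis {ι : Type*} [Fintype ι] (b : OrthonormalBasis ι ℝ E)
    (L : E →L[ℝ] ℝ) : ∑ i, L (b i) ^ 2 = ‖L‖ ^ 2 := by
  simpa using b.sum_sq_inner_left ((InnerProductSpace.toDual ℝ E).symm L)

variable [MeasurableSpace E] [BorelSpace E] {u : E → ℝ} {θ : ℝ}

theorem measurePreserving_equivFun_symm {ι : Type*} [Fintype ι] (b : OrthonormalBasis ι ℝ E) :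
    MeasurePreserving b.toBasis.equivFunL.symm :=
  b.measurePreserving_repr_symm.comp (PiLp.volume_preserving_toLp ι)

theorem integral_sq_mul_log_le (hu : ContDiff ℝ 1 u) (hs : HasCompactSupport u) (hθ : 0 < θ) :
    ∫ x, u x ^ 2 * Real.log (u x) ≤
      θ / 2 * (∫ x, ‖fderiv ℝ u x‖ ^ 2)
        + finrank ℝ E / 4 * Real.log (1 / θ) * (∫ x, u x ^ 2)
        + (∫ x, u x ^ 2) * Real.log √(∫ x, u x ^ 2) := by
  let b := stdOrthonormalBasis ℝ E
  let φ := b.toBasis.equivFunL.symm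
  have hφ (g : E → ℝ) : ∫ x, g (φ x) = ∫ x, g x :=
    (measurePreserving_equivFun_symm b).integral_comp φ.toHomeomorph.measurableEmbedding g
  have hpartial (i) :
      ∫ x, fderiv ℝ (u ∘ φ) x (Pi.single i 1) ^ 2 = ∫ x, fderiv ℝ u x (b i) ^ 2 := by
    rw [← hφ]
    refine integral_congr_ae (.of_forall fun x ↦ ?_)
    simp only [φ.comp_right_fderiv]
    exact congrArg (fderiv ℝ u (φ x) · ^ 2) (b.repr_symm_single i)
  have hgrad : ∑ i, ∫ x, fderiv ℝ u x (b i) ^ 2 = ∫ x, ‖fderiv ℝ u x‖ ^ 2 := by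
    simp_rw [← sum_sq_apply_orthonormalBasis b]
    exact (integral_finsetSum _ fun i _ ↦ integrable_comp_of_hasCompactSupport
      (continuous_fderiv_const_apply hu _) (hs.fderiv_apply ℝ _) (continuous_pow 2)
      (by simp)).symm
  have h := integral_sq_mul_log_le_sum_fderiv (hu.comp φ.contDiff)
    (hs.comp_homeomorph φ.toHomeomorph) hθ
  simpa only [hpartial, hgrad, comp_apply, hφ (fun x ↦ u x ^ 2),
    hφ (fun x ↦ u x ^ 2 * Real.log (u x)), card_fin] using h

end LogSobolev

section SigmaBound

theorem neg_inv_exp_one_le_mul_log {t : ℝ} (ht : 0 ≤ t) : -(Real.exp 1)⁻¹ ≤ t * Real.log t := by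
  rcases ht.eq_or_lt with rfl | ht
  · simp [Real.exp_nonneg]
  have h := Real.self_sub_one_le_mul_log (mul_nonneg ht.le (Real.exp_nonneg 1))
  rw [Real.log_mul ht.ne' (Real.exp_ne_zero 1), Real.log_exp] at h
  rw [neg_le, inv_eq_one_div, le_div_iff₀ (Real.exp_pos 1)]
  linarith

theorem sq_mul_posLog_le (a : ℝ) :
    a ^ 2 * Real.posLog a ≤ a ^ 2 * Real.log a + 1 / (2 * Real.exp 1) := by
  have h : -(Real.exp 1)⁻¹ ≤ a ^ 2 * (2 * Real.log a) := by
    simpa using neg_inv_exp_one_le_mul_log (sq_nonneg a)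
  have he : 0 < (Real.exp 1)⁻¹ := by positivity
  rw [Real.posLog_apply, mul_max_of_nonneg _ _ (sq_nonneg a), mul_zero, one_div, mul_inv]
  exact max_le (by linarith) (by linarith)

theorem continuous_sq_mul_log : Continuous fun a : ℝ ↦ a ^ 2 * Real.log a := by
  simp_rw [pow_two, mul_assoc]
  exact continuous_id.mul Real.continuous_mul_log

theorem sq_le_of_abs_le_add_mul_sqrt_posLog {s x L M : ℝ}
    (h : |s| ≤ L + M * |x| * √(Real.posLog x)) :
    s ^ 2 ≤ 2 * L ^ 2 + 2 * M ^ 2 * (x ^ 2 * Real.posLog x) :=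
  calc s ^ 2 = |s| ^ 2 := (sq_abs s).symm
    _ ≤ (L + M * |x| * √(Real.posLog x)) ^ 2 := by gcongr
    _ ≤ 2 * (L ^ 2 + (M * |x| * √(Real.posLog x)) ^ 2) := add_sq_le
    _ = 2 * L ^ 2 + 2 * M ^ 2 * (x ^ 2 * Real.posLog x) := by
        rw [mul_pow, mul_pow, sq_abs, Real.sq_sqrt Real.posLog_nonneg]
        ring

variable {E : Type*} [NormedAddCommGroup E] [InnerProductSpace ℝ E] [FiniteDimensional ℝ E]
  [MeasurableSpace E] [BorelSpace E] {D : Set E} {u : E → ℝ} {θ : ℝ}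

theorem setIntegral_sq_mul_posLog_le (hD : volume D ≠ ⊤)
    (hu : ContDiff ℝ 1 u) (hs : HasCompactSupport u) (huD : support u ⊆ D) (hθ : 0 < θ) :
    ∫ x in D, u x ^ 2 * Real.posLog (u x) ≤
      θ / 2 * (∫ x, ‖fderiv ℝ u x‖ ^ 2)
        + finrank ℝ E / 4 * Real.log (1 / θ) * (∫ x, u x ^ 2)
        + (∫ x, u x ^ 2) * Real.log √(∫ x, u x ^ 2)
        + (volume D).toReal / (2 * Real.exp 1) := by
  have hint : Integrable fun x ↦ u x ^ 2 * Real.log (u x) :=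
    integrable_comp_of_hasCompactSupport hu.continuous hs continuous_sq_mul_log (by simp)
  have hconst : Integrable (fun _ : E ↦ 1 / (2 * Real.exp 1)) (volume.restrict D) :=
    integrableOn_const hD
  calc ∫ x in D, u x ^ 2 * Real.posLog (u x)
      ≤ ∫ x in D, (u x ^ 2 * Real.log (u x) + 1 / (2 * Real.exp 1)) :=
        integral_mono_of_nonneg
          (.of_forall fun x ↦ mul_nonneg (sq_nonneg _) Real.posLog_nonneg)
          (hint.restrict.add hconst) (.of_forall fun x ↦ sq_mul_posLog_le (u x))
    _ = (∫ x, u x ^ 2 * Real.log (u x)) + (volume D).toReal / (2 * Real.exp 1) := by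
        rw [integral_add hint.integrableOn hconst, setIntegral_const, smul_eq_mul,
          measureReal_def, mul_one_div, setIntegral_eq_integral_of_forall_compl_eq_zero]
        intro x hx
        simp [notMem_support.1 fun h ↦ hx (huD h)]
    _ ≤ _ := by
        gcongr
        exact integral_sq_mul_log_le hu hs hθ

theorem sigma_square_bound_general {σ : ℝ → ℝ} {L₃ L₄ : ℝ} (hD : volume D ≠ ⊤)
    (hσ : ∀ x, |σ x| ≤ L₃ + L₄ * |x| * √(Real.posLog x))
    (hu : ContDiff ℝ 1 u) (hs : HasCompactSupport u) (huD : support u ⊆ D) (hθ : 0 < θ) :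
    ∫ x in D, σ (u x) ^ 2 ≤
      2 * L₃ ^ 2 * (volume D).toReal
        + 2 * L₄ ^ 2 *
          (θ / 2 * (∫ x, ‖fderiv ℝ u x‖ ^ 2)
            + finrank ℝ E / 4 * Real.log (1 / θ) * (∫ x, u x ^ 2)
            + (∫ x, u x ^ 2) * Real.log √(∫ x, u x ^ 2)
            + (volume D).toReal / (2 * Real.exp 1)) := by
  have hint : Integrable fun x ↦ u x ^ 2 * Real.posLog (u x) :=
    integrable_comp_of_hasCompactSupport hu.continuous hs
      ((continuous_pow 2).mul Real.continuous_posLog) (by simp)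
  have hconst : Integrable (fun _ : E ↦ 2 * L₃ ^ 2) (volume.restrict D) := integrableOn_const hD
  calc ∫ x in D, σ (u x) ^ 2
      ≤ ∫ x in D, (2 * L₃ ^ 2 + 2 * L₄ ^ 2 * (u x ^ 2 * Real.posLog (u x))) :=
        integral_mono_of_nonneg (.of_forall fun x ↦ sq_nonneg _)
          (hconst.add (hint.integrableOn.const_mul _))
          (.of_forall fun x ↦ sq_le_of_abs_le_add_mul_sqrt_posLog (hσ (u x)))
    _ = 2 * L₃ ^ 2 * (volume D).toReal
          + 2 * L₄ ^ 2 * ∫ x in D, u x ^ 2 * Real.posLog (u x) := by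
        rw [integral_add hconst (hint.integrableOn.const_mul _), setIntegral_const, smul_eq_mul,
          measureReal_def, mul_comm, integral_const_mul]
    _ ≤ _ := by
        gcongr
        exact setIntegral_sq_mul_posLog_le hD hu hs huD hθ

end SigmaBound

/-- If `|σ(x)| ≤ L₃ + L₄ |x| (log₊|x|)^{1/2}`, then for smooth `u` compactly supported in a
bounded measurable set `D` and `θ > 0`:
`∫_D σ(u)² ≤ 2L₃² m(D) + 2L₄² [θ ‖∇u‖² + (d/4) log(1/θ) ‖u‖² + ‖u‖² log‖u‖ + m(D)/(2e)]`. -/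
theorem sigma_square_bound
    (d : ℕ) (hd : 1 ≤ d)
    (D : Set (EuclideanSpace ℝ (Fin d)))
    (hDmeas : MeasurableSet D) (hDbdd : Bornology.IsBounded D)
    (σ : ℝ → ℝ) (L₃ L₄ : ℝ) (hL₃ : 0 < L₃) (hL₄ : 0 < L₄)
    (hσ : ∀ x : ℝ, |σ x| ≤ L₃ + L₄ * |x| * Real.sqrt (Real.log (max 1 |x|)))
    (u : EuclideanSpace ℝ (Fin d) → ℝ)
    (hu : ContDiff ℝ (⊤ : ℕ∞) u) (hsupp : HasCompactSupport u) (hsuppD : tsupport u ⊆ D)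
    (θ : ℝ) (hθ : 0 < θ) :
    (∫ x in D, σ (u x) ^ 2) ≤
      2 * L₃ ^ 2 * (volume D).toReal
        + 2 * L₄ ^ 2 *
          (θ * (∫ x, ‖fderiv ℝ u x‖ ^ 2)
            + (d / 4 : ℝ) * Real.log (1 / θ) * (∫ x, u x ^ 2)
            + (∫ x, u x ^ 2) * Real.log (Real.sqrt (∫ x, u x ^ 2))
            + (volume D).toReal / (2 * Real.exp 1)) := by
  have hσ' (x : ℝ) : |σ x| ≤ L₃ + L₄ * |x| * √(Real.posLog x) := by
    rw [← Real.posLog_abs, Real.posLog_eq_log_max_one (abs_nonneg x)]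
    exact hσ x
  have h := sigma_square_bound_general hDbdd.measure_lt_top.ne hσ' (hu.of_le (mod_cast le_top))
    hsupp ((subset_tsupport u).trans hsuppD) hθ
  rw [finrank_euclideanSpace_fin] at h
  exact h.trans (by gcongr; exact half_le_self hθ.le)
end
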